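/- Let (Ω, 𝔉, P) be a probability space, 𝔊 ⊆ 𝔉 a sub-σ-algebra, and ε a real-valued random variable that has full conditional support given 𝔊. Then for every 𝔊-measurable real-valued random variable W and every nonempty open interval I ⊆ ℝ, one has P(ε − W ∈ I) > 0. -/

import Mathlib

open MeasureTheory Set

/-- A real-valued random variable `ε` has *full conditional support* given a
sub-σ-algebra `m` if for every `m`-measurable set `A` of positive probability and
every nonempty open interval `(a, b)`, the event `A ∩ {ε ∈ (a, b)}` has positive
probability. -/
def FullCondSupport {Ω : Type*} {mΩ : MeasurableSpace Ω} (P : Measure Ω)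
    (m : MeasurableSpace Ω) (ε : Ω → ℝ) : Prop :=
  ∀ A : Set Ω, MeasurableSet[m] A → 0 < P A →
    ∀ a b : ℝ, a < b → 0 < P (A ∩ {ω | ε ω ∈ Set.Ioo a b})

/-!
At a point `w` around which `W` concentrates, `W` stays close to `w` on an `m`-measurable event of
positive probability. On that event `ε - W` is within a small error of `ε - w`, and full conditional
support lets `ε` be prescribed there up to a small error.
-/

open scoped ENNReal Topology

lemma exists_forall_mem_nhds_measure_inter_preimage_pos {Ω X F : Type*}
    [FunLike F (Set Ω) ℝ≥0∞] [OuterMeasureClass F Ω] [TopologicalSpace X]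
    [SecondCountableTopology X] {μ : F} {A : Set Ω} (hA : 0 < μ A) (f : Ω → X) :
    ∃ x, ∀ U ∈ 𝓝 x, 0 < μ (A ∩ f ⁻¹' U) := by
  -- In the topology induced by `f`, this is the existence of a point where `μ` charges `A` locally.
  let _ : TopologicalSpace Ω := .induced f inferInstance
  have : SecondCountableTopology Ω := TopologicalSpace.secondCountableTopology_induced Ω X f
  obtain ⟨ω, -, hω⟩ := exists_mem_forall_mem_nhdsWithin_pos_measure hA.ne'
  refine ⟨f ω, fun U hU => hω _ ?_⟩
  exact Filter.inter_mem self_mem_nhdsWithin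
    (mem_nhdsWithin_of_mem_nhds (continuous_induced_dom.continuousAt hU))

namespace FullCondSupport

variable {Ω : Type*} {m mΩ : MeasurableSpace Ω} {P : Measure Ω} {ε : Ω → ℝ}

lemma measure_inter_preimage_pos (hε : FullCondSupport P m ε) {A : Set Ω}
    (hA : MeasurableSet[m] A) (hPA : 0 < P A) {e : ℝ} {U : Set ℝ} (hU : U ∈ 𝓝 e) :
    0 < P (A ∩ ε ⁻¹' U) := by
  obtain ⟨c, d, ⟨hce, hed⟩, hcdU⟩ := mem_nhds_iff_exists_Ioo_subset.mp hU
  exact (hε A hA hPA c d (hce.trans hed)).trans_le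
    (measure_mono (inter_subset_inter_right A (preimage_mono hcdU)))

theorem comp_continuous {X : Type*} [TopologicalSpace X] [SecondCountableTopology X]
    [MeasurableSpace X] [OpensMeasurableSpace X] (hε : FullCondSupport P m ε)
    {W : Ω → X} (hW : Measurable[m] W) {g : ℝ × X → ℝ} (hg : Continuous g)
    (hg_dense : ∀ w, DenseRange fun e => g (e, w)) :
    FullCondSupport P m fun ω => g (ε ω, W ω) := by
  intro A hA hPA a b hab
  obtain ⟨w, hw⟩ := exists_forall_mem_nhds_measure_inter_preimage_pos hPA W
  obtain ⟨e, he⟩ : ∃ e, g (e, w) ∈ Ioo a b :=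
    (hg_dense w).exists_mem_open isOpen_Ioo (nonempty_Ioo.mpr hab)
  obtain ⟨U, V, hU, heU, hV, hwV, hUV⟩ :=
    mem_nhds_prod_iff'.mp (hg.continuousAt (isOpen_Ioo.mem_nhds he))
  have hAV : MeasurableSet[m] (A ∩ W ⁻¹' V) := hA.inter (hW hV.measurableSet)
  have hPAV : 0 < P (A ∩ W ⁻¹' V) := hw V (hV.mem_nhds hwV)
  refine (hε.measure_inter_preimage_pos hAV hPAV (hU.mem_nhds heU)).trans_le (measure_mono ?_)
  rintro ω ⟨⟨hωA, hωV⟩, hωU⟩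
  exact ⟨hωA, hUV ⟨hωU, hωV⟩⟩

end FullCondSupport

theorem stmt_0_general {Ω : Type*} {m _ : MeasurableSpace Ω} {P : Measure Ω}
    {ε W : Ω → ℝ} (hε : FullCondSupport P m ε) (hW : Measurable[m] W) :
    FullCondSupport P m fun ω => ε ω - W ω :=
  hε.comp_continuous hW continuous_sub fun w => (Equiv.subRight w).surjective.denseRange

/-- If `ε` has full conditional support given the sub-σ-algebra `m` and `W` is
`m`-measurable, then `ε − W` lands in any nonempty open interval with positive
probability. -/
theorem stmt_0 {Ω : Type*} [inst : MeasurableSpace Ω] (P : Measure Ω)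
    [IsProbabilityMeasure P]
    (m : MeasurableSpace Ω) (hm : m ≤ inst)
    (ε : Ω → ℝ) (hε : FullCondSupport P m ε)
    (W : Ω → ℝ) (hW : Measurable[m] W)
    (a b : ℝ) (hab : a < b) :
    0 < P {ω | ε ω - W ω ∈ Set.Ioo a b} := by
  have hP : 0 < P univ := Measure.measure_univ_pos.mpr (NeZero.ne P)
  simpa only [univ_inter] using stmt_0_general hε hW univ MeasurableSet.univ hP a b hab
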